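/- Proposition 1 (TDMA, unbounded peak power). Consider Problem (P1') without the peak power constraints. Let (α₀, α₁, …, α_K, s₀, …, s_K, m₁, …, m_K) be any feasible point with 0 < α₀ < 1, and let α₀' satisfy 0 < α₀' < α₀. Set t = (1 − α₀')/(1 − α₀) ≥ 1. Then the point (α₀', t α₁, …, t α_K, s₀, …, s_K, m₁, …, m_K) is also feasible, and its sum-rate is greater than or equal to the sum-rate of the original point. Consequently, the supremum of the sum-rate is approached as the WPT time α₀ tends to 0. -/

import Mathlib

open Finset

/-- Per-pair decode-and-forward rate in Problem (P1') (TDMA, energy variables):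
time fraction `a`, source transmit energy `mk` (first-hop gain `h1k`), relay transmit
energy `sk` (second-hop gain `h2k`), noise power `σ²`; the rate is `0` when `a = 0`. -/
noncomputable def tdmaRate (σ a mk h1k sk h2k : ℝ) : ℝ :=
  if a = 0 then 0
  else (a / 2) * min (Real.logb 2 (1 + 2 * mk * h1k / (a * σ ^ 2)))
                     (Real.logb 2 (1 + 2 * sk * h2k / (a * σ ^ 2)))

/-!
As a function of its time fraction `a`, the rate of a pair at fixed energies is `a * φ a⁻¹`, where
`φ` is half the minimum of two functions `logb 2 (1 + c * u)`, hence concave on `[0, ∞)`, and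
`φ 0 = 0`. Concavity between `0` and `u` gives `φ u ≤ t * φ (t⁻¹ * u)` for `t ≥ 1`, so stretching
`a` to `t * a` cannot lower the rate. The factor `t = (1 - α₀') / (1 - α₀)` carries the bound
`1 - α₀` on the total information time to the bound `1 - α₀'`.
-/

theorem le_smul_map_inv_smul_of_concaveOn {𝕜 E β : Type*} [Field 𝕜] [LinearOrder 𝕜]
    [IsStrictOrderedRing 𝕜] [AddCommMonoid E] [Module 𝕜 E] [AddCommGroup β] [PartialOrder β]
    [IsOrderedAddMonoid β] [Module 𝕜 β] [PosSMulMono 𝕜 β]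
    {S : Set E} {f : E → β} (hf : ConcaveOn 𝕜 S f) (zero_mem : 0 ∈ S) (map_zero_nonneg : 0 ≤ f 0)
    {x : E} (hx : x ∈ S) {t : 𝕜} (ht : 1 ≤ t) : f x ≤ t • f (t⁻¹ • x) := by
  have ht₀ : 0 < t := one_pos.trans_le ht
  have hw : 0 ≤ 1 - t⁻¹ := sub_nonneg.2 (inv_le_one_of_one_le₀ ht)
  rw [← inv_smul_le_iff_of_pos ht₀]
  calc
    t⁻¹ • f x ≤ t⁻¹ • f x + (1 - t⁻¹) • f 0 :=
      le_add_of_nonneg_right (smul_nonneg hw map_zero_nonneg)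
    _ ≤ f (t⁻¹ • x + (1 - t⁻¹) • 0) :=
      hf.2 hx zero_mem (inv_nonneg.2 ht₀.le) hw (add_sub_cancel _ _)
    _ = f (t⁻¹ • x) := by rw [smul_zero, add_zero]

theorem mul_map_inv_le_of_concaveOn {φ : ℝ → ℝ} (hφ : ConcaveOn ℝ (Set.Ici 0) φ)
    (map_zero_nonneg : 0 ≤ φ 0) {a t : ℝ} (ha : 0 ≤ a) (ht : 1 ≤ t) :
    a * φ a⁻¹ ≤ t * a * φ (t * a)⁻¹ := by
  calc
    a * φ a⁻¹ ≤ a * (t * φ (t⁻¹ * a⁻¹)) :=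
      mul_le_mul_of_nonneg_left (le_smul_map_inv_smul_of_concaveOn hφ Set.self_mem_Ici
        map_zero_nonneg (Set.mem_Ici.2 (inv_nonneg.2 ha)) ht) ha
    _ = t * a * φ (t * a)⁻¹ := by rw [mul_inv, mul_left_comm, mul_assoc]

theorem concaveOn_logb_Ioi {b : ℝ} (hb : 1 ≤ b) : ConcaveOn ℝ (Set.Ioi 0) (Real.logb b) := by
  refine (strictConcaveOn_log_Ioi.concaveOn.smul (inv_nonneg.2 (Real.log_nonneg hb))).congr ?_
  intro x _
  exact inv_mul_eq_div _ _

theorem concaveOn_logb_one_add_mul {b c : ℝ} (hb : 1 ≤ b) (hc : 0 ≤ c) :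
    ConcaveOn ℝ (Set.Ici 0) fun u ↦ Real.logb b (1 + c * u) := by
  have hline (u : ℝ) : AffineMap.lineMap (1 : ℝ) (1 + c) u = 1 + c * u := by
    rw [AffineMap.lineMap_apply_ring']
    ring
  have hmaps : Set.Ici (0 : ℝ) ⊆ AffineMap.lineMap (1 : ℝ) (1 + c) ⁻¹' Set.Ioi 0 := by
    intro u (hu : 0 ≤ u)
    rw [Set.mem_preimage, hline, Set.mem_Ioi]
    positivity
  refine (((concaveOn_logb_Ioi hb).comp_affineMap _).subset hmaps (convex_Ici 0)).congr ?_
  intro u _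
  rw [Function.comp_apply, hline]

/-- The rate per unit of time of decode-and-forward relaying over two hops that split the time
equally, as a function of the reciprocal `u` of the time fraction over which the transmit energies
are spent; `p` and `q` are the signal-to-noise ratios of the two hops at `u = 1`. -/
noncomputable def relayEfficiency (p q u : ℝ) : ℝ :=
  min (Real.logb 2 (1 + p * u)) (Real.logb 2 (1 + q * u)) / 2

theorem relayEfficiency_zero (p q : ℝ) : relayEfficiency p q 0 = 0 := by
  simp [relayEfficiency]

theorem concaveOn_relayEfficiency {p q : ℝ} (hp : 0 ≤ p) (hq : 0 ≤ q) :
    ConcaveOn ℝ (Set.Ici 0) (relayEfficiency p q) := by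
  have hmin := (concaveOn_logb_one_add_mul one_le_two hp).inf
    (concaveOn_logb_one_add_mul one_le_two hq)
  refine (hmin.smul (inv_nonneg.2 zero_le_two)).congr ?_
  intro u _
  exact inv_mul_eq_div _ _

theorem tdmaRate_eq_mul_relayEfficiency (σ a mk h1k sk h2k : ℝ) :
    tdmaRate σ a mk h1k sk h2k =
      a * relayEfficiency (2 * mk * h1k / σ ^ 2) (2 * sk * h2k / σ ^ 2) a⁻¹ := by
  have hsnr (y : ℝ) : y / (a * σ ^ 2) = y / σ ^ 2 * a⁻¹ := by
    rw [mul_comm a, ← div_div, div_eq_mul_inv _ a]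
  by_cases ha : a = 0
  · rw [tdmaRate, if_pos ha, ha, zero_mul]
  · rw [tdmaRate, if_neg ha, hsnr, hsnr, relayEfficiency, div_mul_eq_mul_div, mul_div_assoc]

-- Where `α k = 0`, the summand `α k * φ k (α k)⁻¹` is `0`: a pair without time has rate zero.
theorem stmt_10_general {ι : Type*} [Fintype ι] {φ : ι → ℝ → ℝ}
    (hφ : ∀ k, ConcaveOn ℝ (Set.Ici 0) (φ k)) (hφ₀ : ∀ k, 0 ≤ φ k 0)
    {α₀ α₀' : ℝ} {α : ι → ℝ} (hα₀ : α₀ < 1) (hα : ∀ k, 0 ≤ α k) (htime : α₀ + ∑ k, α k ≤ 1)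
    (hα₀' : α₀' ≤ α₀) :
    let t : ℝ := (1 - α₀') / (1 - α₀)
    1 ≤ t ∧ (∀ k, 0 ≤ t * α k) ∧ α₀' + ∑ k, t * α k ≤ 1 ∧
    ∑ k, α k * φ k (α k)⁻¹ ≤ ∑ k, t * α k * φ k (t * α k)⁻¹ := by
  intro t
  have hpos : 0 < 1 - α₀ := sub_pos.2 hα₀
  have ht : 1 ≤ t := (one_le_div hpos).2 (sub_le_sub_left hα₀' 1)
  have ht₀ : 0 ≤ t := zero_le_one.trans ht
  have htime' : ∑ k, t * α k ≤ 1 - α₀' := calc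
    ∑ k, t * α k = t * ∑ k, α k := (mul_sum ..).symm
    _ ≤ t * (1 - α₀) := mul_le_mul_of_nonneg_left (by linarith) ht₀
    _ = 1 - α₀' := div_mul_cancel₀ _ hpos.ne'
  exact ⟨ht, fun k ↦ mul_nonneg ht₀ (hα k), by linarith,
    sum_le_sum fun k _ ↦ mul_map_inv_le_of_concaveOn (hφ k) (hφ₀ k) (hα k) ht⟩

/-- Proposition 1 (TDMA, unbounded peak power).  For any feasible point of Problem (P1')
without peak power constraints with `0 < α₀ < 1`, and any `0 < α₀' < α₀`, setting
`t = (1 − α₀')/(1 − α₀) ≥ 1`, the rescaled point `(α₀', t α₁, …, t α_K, s, m)` is also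
feasible and its sum-rate is at least the original sum-rate. -/
theorem stmt_10
    (K : ℕ) (hK : 1 ≤ K) (σ η P : ℝ) (hσ : 0 < σ) (hη0 : 0 < η) (hη1 : η < 1) (hP : 0 < P)
    (gr : Fin K → ℝ) (hgr : ∀ k, 0 < gr k)
    (g : Fin K → Fin K → ℝ) (hg : ∀ i k, 0 ≤ g i k)
    (h1 h2 : Fin K → ℝ) (hh1 : ∀ k, 0 < h1 k) (hh2 : ∀ k, 0 < h2 k)
    (Ec : Fin K → ℝ) (hEc : ∀ k, 0 ≤ Ec k)
    -- a feasible point of Problem (P1') (no peak power constraints)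
    (α₀ : ℝ) (α : Fin K → ℝ) (s₀ : ℝ) (s m : Fin K → ℝ)
    (hα₀pos : 0 < α₀) (hα₀lt1 : α₀ < 1)
    (hαnn : ∀ k, 0 ≤ α k) (htime : α₀ + ∑ k, α k ≤ 1)
    (hs₀ : 0 ≤ s₀) (hs : ∀ k, 0 ≤ s k) (henergy : s₀ + ∑ k, s k ≤ P)
    (hm : ∀ k, 0 ≤ m k)
    (hcaus : ∀ k, m k + Ec k ≤
      η * ((s₀ + ∑ i ∈ univ.filter (fun i => i < k), s i) * gr k
            + ∑ i ∈ univ.filter (fun i => i < k), m i * g i k))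
    -- a smaller WPT time
    (α₀' : ℝ) (hα₀'pos : 0 < α₀') (hα₀'lt : α₀' < α₀) :
    let t : ℝ := (1 - α₀') / (1 - α₀)
    -- `t ≥ 1` and the rescaled point is feasible
    1 ≤ t ∧ (∀ k, 0 ≤ t * α k) ∧ α₀' + ∑ k, t * α k ≤ 1 ∧
    -- the sum-rate does not decrease
    (∑ k, tdmaRate σ (α k) (m k) (h1 k) (s k) (h2 k)) ≤
      ∑ k, tdmaRate σ (t * α k) (m k) (h1 k) (s k) (h2 k) := by
  simp only [tdmaRate_eq_mul_relayEfficiency]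
  have hsnr {e h : ℝ} (he : 0 ≤ e) (hh : 0 < h) : 0 ≤ 2 * e * h / σ ^ 2 := by positivity
  exact stmt_10_general
    (fun k ↦ concaveOn_relayEfficiency (hsnr (hm k) (hh1 k)) (hsnr (hs k) (hh2 k)))
    (fun k ↦ (relayEfficiency_zero _ _).ge) hα₀lt1 hαnn htime hα₀'lt.le
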